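/- There exists a constant C > 0 such that for every R with 0 < R < e^{-1} and every smooth compactly supported f : ℝ² × ℝ² → ℂ, ∬_{ℝ²×ℝ²} ‖K_R(x − y)‖² |f(x,y)|² dx dy ≤ C |log R|² ∬_{ℝ²×ℝ²} ( |f(x,y)|² + ‖∇_x f(x,y)‖² ) dx dy, where ∇_x denotes the gradient in the first ℝ²-variable. (Equivalently, as operators on L²(ℝ⁴), the multiplication operator |∇w_R(x−y)|² is bounded by C|log R|² (1 − Δ_x).) -/

import Mathlib

noncomputable section
open MeasureTheory ENNReal
open scoped RealInnerProductSpace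

/-- The plane `ℝ²`. -/
abbrev E2 : Type := EuclideanSpace ℝ (Fin 2)

/-- The rotation by 90 degrees: `x^⊥ = (-x₂, x₁)`. -/
def perp (x : E2) : E2 := (WithLp.equiv 2 (Fin 2 → ℝ)).symm ![-(x 1), x 0]

/-- The Aharonov–Bohm kernel `K_R(x) = x^⊥ / (max R ‖x‖)²` (with `K_R 0 = 0`,
also when `R = 0`, by the junk-value convention `(0 : ℝ)⁻¹ = 0`). -/
def K (R : ℝ) (x : E2) : E2 := ((max R ‖x‖) ^ 2)⁻¹ • perp x

/-- The standard basis of `ℝ²`. -/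
def e2 (j : Fin 2) : E2 := EuclideanSpace.single j 1

/-- Componentwise convolution of the vector kernel `K_R` with a scalar density. -/
def convKs (R : ℝ) (ρ : E2 → ℝ) (x : E2) : E2 := ∫ y, ρ y • K R (x - y)

/-- Convolution of the vector kernel `K_R` with a vector field, summed over components. -/
def convKv (R : ℝ) (F : E2 → E2) (x : E2) : ℝ := ∫ y, ⟪K R (x - y), F y⟫

/-- The current `J[u] = i(u∇ū - ū∇u) = 2 Im(ū ∇u)`, an `ℝ²`-valued function. -/
def Jf (u : E2 → ℂ) (x : E2) : E2 :=
  (WithLp.equiv 2 (Fin 2 → ℝ)).symm fun j =>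
    2 * ((starRingEnd ℂ) (u x) * fderiv ℝ u x (e2 j)).im

/-- The `H¹` norm `(‖u‖₂² + ‖∇u‖₂²)^{1/2}` (extended-real valued). -/
def H1 (u : E2 → ℂ) : ℝ≥0∞ :=
  (eLpNorm u 2 volume ^ 2 + eLpNorm (fun x => fderiv ℝ u x) 2 volume ^ 2) ^ (1 / 2 : ℝ)

/-- The `H²` norm `(‖u‖₂² + ‖∇u‖₂² + ‖∇²u‖₂²)^{1/2}` (extended-real valued). -/
def H2 (u : E2 → ℂ) : ℝ≥0∞ :=
  (eLpNorm u 2 volume ^ 2 + eLpNorm (fun x => fderiv ℝ u x) 2 volume ^ 2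
    + eLpNorm (fun x => fderiv ℝ (fderiv ℝ u) x) 2 volume ^ 2) ^ (1 / 2 : ℝ)

/-!
For `a > 0` and a `C¹` vector field `V`, the identity `∫ div (‖f‖² V) = 0` and Young's inequality
give `∫ (div V - ‖V‖² / a) ‖f‖² ≤ a ∫ ‖∇f‖²`. Let `w = ‖x‖² / (R² + ‖x‖²)²`. The field
`V x = log (1 + ‖x‖² / R²) / (R² + ‖x‖²) • x` has `div V ≥ 2 w` in dimension at least two, and
`‖V‖² ≤ 8 ((log R)² w + 1)`, so that for `a = 8 (1 + (log R)²)` the left-hand side dominates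
`∫ (w - 1) ‖f‖²`. As `‖K R x‖² ≤ 4 w`, the theorem follows by applying this to every slice
`x ↦ f (x, y)`, translated by `y`, and integrating over `y`.
-/

section Integrability

variable {X F : Type*} [TopologicalSpace X] [NormedAddCommGroup F] {f : X → F}

lemma hasCompactSupport_norm_sq (hc : HasCompactSupport f) :
    HasCompactSupport (fun x => ‖f x‖ ^ 2) :=
  hc.comp_left (g := fun v : F => ‖v‖ ^ 2) (by simp)

variable [MeasurableSpace X] [OpensMeasurableSpace X] {μ : Measure X} [IsFiniteMeasureOnCompacts μ]

lemma integrable_mul_norm_sq {w : X → ℝ} (hw : Continuous w) (hf : Continuous f)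
    (hc : HasCompactSupport f) : Integrable (fun x => w x * ‖f x‖ ^ 2) μ :=
  (hw.mul (hf.norm.pow 2)).integrable_of_hasCompactSupport
    (hasCompactSupport_norm_sq hc).mul_left

lemma integrable_norm_sq (hf : Continuous f) (hc : HasCompactSupport f) :
    Integrable (fun x => ‖f x‖ ^ 2) μ :=
  (hf.norm.pow 2).integrable_of_hasCompactSupport (hasCompactSupport_norm_sq hc)

end Integrability

lemma integrable_fderiv {E G : Type*} [NormedAddCommGroup E] [NormedSpace ℝ E]
    [NormedAddCommGroup G] [NormedSpace ℝ G] [MeasurableSpace E] [OpensMeasurableSpace E]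
    {μ : Measure E} [IsFiniteMeasureOnCompacts μ] {V : E → G} (hV : ContDiff ℝ 1 V)
    (hc : HasCompactSupport V) : Integrable (fderiv ℝ V) μ :=
  (hV.continuous_fderiv one_ne_zero).integrable_of_hasCompactSupport (hc.fderiv (𝕜 := ℝ))

section Divergence

variable {E F : Type*} [NormedAddCommGroup E] [NormedSpace ℝ E]
  [NormedAddCommGroup F] [InnerProductSpace ℝ F]

variable (E) in
/-- The trace on the endomorphisms of a finite-dimensional space, as a continuous linear map, so
that it commutes with integration. -/
def traceCLM [FiniteDimensional ℝ E] : (E →L[ℝ] E) →L[ℝ] ℝ :=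
  LinearMap.toContinuousLinearMap (LinearMap.trace ℝ E ∘ₗ ContinuousLinearMap.coeLM ℝ)

/-- The divergence of a vector field, as the trace of its derivative. It is the multiplier in the
Hardy-type inequality `integral_divergence_sub_mul_norm_sq_le`. -/
def divergence [FiniteDimensional ℝ E] (V : E → E) (x : E) : ℝ := traceCLM E (fderiv ℝ V x)

lemma continuous_divergence [FiniteDimensional ℝ E] {V : E → E} (hV : ContDiff ℝ 1 V) :
    Continuous (divergence V) :=
  (traceCLM E).continuous.comp (hV.continuous_fderiv one_ne_zero)

lemma divergence_smul [FiniteDimensional ℝ E] {g : E → ℝ} {V : E → E} {x : E}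
    (hg : DifferentiableAt ℝ g x) (hV : DifferentiableAt ℝ V x) :
    divergence (fun y => g y • V y) x = g x * divergence V x + fderiv ℝ g x (V x) := by
  have hrank : traceCLM E ((fderiv ℝ g x).smulRight (V x)) = fderiv ℝ g x (V x) :=
    LinearMap.trace_smulRight (fderiv ℝ g x : E →ₗ[ℝ] ℝ) (V x)
  rw [divergence, fderiv_fun_smul hg hV, map_add, map_smul, hrank, smul_eq_mul, divergence]

lemma divergence_norm_sq_smul [FiniteDimensional ℝ E] {f : E → F} {V : E → E} {x : E}
    (hf : DifferentiableAt ℝ f x) (hV : DifferentiableAt ℝ V x) :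
    divergence (fun y => ‖f y‖ ^ 2 • V y) x =
      ‖f x‖ ^ 2 * divergence V x + 2 * ⟪f x, fderiv ℝ f x (V x)⟫ := by
  rw [divergence_smul (hf.norm_sq ℝ) hV, hf.hasFDerivAt.norm_sq.fderiv]
  simp

lemma divergence_sub_mul_norm_sq_le [FiniteDimensional ℝ E] {f : E → F} {V : E → E} {x : E}
    {a : ℝ} (ha : 0 < a) (hf : DifferentiableAt ℝ f x) (hV : DifferentiableAt ℝ V x) :
    (divergence V x - ‖V x‖ ^ 2 / a) * ‖f x‖ ^ 2 ≤
      divergence (fun y => ‖f y‖ ^ 2 • V y) x + a * ‖fderiv ℝ f x‖ ^ 2 := by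
  have hcross : -⟪f x, fderiv ℝ f x (V x)⟫ ≤ ‖V x‖ * ‖f x‖ * ‖fderiv ℝ f x‖ :=
    calc -⟪f x, fderiv ℝ f x (V x)⟫
        ≤ |⟪f x, fderiv ℝ f x (V x)⟫| := neg_le_abs _
      _ ≤ ‖f x‖ * ‖fderiv ℝ f x (V x)‖ := abs_real_inner_le_norm _ _
      _ ≤ ‖f x‖ * (‖fderiv ℝ f x‖ * ‖V x‖) := by gcongr; exact (fderiv ℝ f x).le_opNorm _
      _ = ‖V x‖ * ‖f x‖ * ‖fderiv ℝ f x‖ := by ring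
  have hyoung : 2 * (‖V x‖ * ‖f x‖ * ‖fderiv ℝ f x‖) ≤
      ‖V x‖ ^ 2 / a * ‖f x‖ ^ 2 + a * ‖fderiv ℝ f x‖ ^ 2 := by
    have hsq : 0 ≤ (‖V x‖ * ‖f x‖ - a * ‖fderiv ℝ f x‖) ^ 2 / a := by positivity
    have hexpand : (‖V x‖ * ‖f x‖ - a * ‖fderiv ℝ f x‖) ^ 2 / a =
        ‖V x‖ ^ 2 / a * ‖f x‖ ^ 2 + a * ‖fderiv ℝ f x‖ ^ 2
          - 2 * (‖V x‖ * ‖f x‖ * ‖fderiv ℝ f x‖) := by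
      field_simp
      ring
    linarith
  rw [divergence_norm_sq_smul hf hV]
  linarith

variable [FiniteDimensional ℝ E] [MeasurableSpace E] [BorelSpace E]
  {μ : Measure E} [μ.IsAddHaarMeasure]

lemma integral_fderiv_eq_zero {G : Type*} [NormedAddCommGroup G] [NormedSpace ℝ G]
    {V : E → G} (hV : ContDiff ℝ 1 V) (hc : HasCompactSupport V) :
    ∫ x, fderiv ℝ V x ∂μ = 0 := by
  have hint := integrable_fderiv (μ := μ) hV hc
  ext v
  have hparts := integral_bilinear_fderiv_right_eq_neg_left_of_integrable
    (μ := μ) (B := ContinuousLinearMap.lsmul ℝ ℝ) (f := fun _ => (1 : ℝ)) (g := V) (v := v)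
    (by simp) (by simpa using hint.apply_continuousLinearMap v)
    (by simpa using hV.continuous.integrable_of_hasCompactSupport hc)
    (fun _ _ => differentiableAt_const _) (fun x _ => hV.differentiable one_ne_zero x)
  simpa [ContinuousLinearMap.integral_apply hint] using hparts

lemma integrable_divergence {V : E → E} (hV : ContDiff ℝ 1 V) (hc : HasCompactSupport V) :
    Integrable (divergence V) μ :=
  (traceCLM E).integrable_comp (integrable_fderiv hV hc)

lemma integral_divergence_eq_zero {V : E → E} (hV : ContDiff ℝ 1 V) (hc : HasCompactSupport V) :
    ∫ x, divergence V x ∂μ = 0 := by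
  have hcomm := (traceCLM E).integral_comp_comm (integrable_fderiv (μ := μ) hV hc)
  rwa [integral_fderiv_eq_zero hV hc, map_zero] at hcomm

lemma integral_divergence_sub_mul_norm_sq_le {f : E → F} {V : E → E} {a : ℝ} (ha : 0 < a)
    (hV : ContDiff ℝ 1 V) (hf : ContDiff ℝ 1 f) (hc : HasCompactSupport f) :
    ∫ x, (divergence V x - ‖V x‖ ^ 2 / a) * ‖f x‖ ^ 2 ∂μ ≤ a * ∫ x, ‖fderiv ℝ f x‖ ^ 2 ∂μ := by
  have hfV : ContDiff ℝ 1 (fun x => ‖f x‖ ^ 2 • V x) := (hf.norm_sq ℝ).smul hV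
  have hc_fV : HasCompactSupport (fun x => ‖f x‖ ^ 2 • V x) :=
    (hasCompactSupport_norm_sq hc).smul_right
  have hint_left : Integrable (fun x => (divergence V x - ‖V x‖ ^ 2 / a) * ‖f x‖ ^ 2) μ :=
    integrable_mul_norm_sq
      ((continuous_divergence hV).sub ((hV.continuous.norm.pow 2).div_const a)) hf.continuous hc
  have hint_div : Integrable (divergence fun x => ‖f x‖ ^ 2 • V x) μ :=
    integrable_divergence hfV hc_fV
  have hint_grad : Integrable (fun x => ‖fderiv ℝ f x‖ ^ 2) μ :=
    integrable_norm_sq (hf.continuous_fderiv one_ne_zero) (hc.fderiv (𝕜 := ℝ))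
  calc ∫ x, (divergence V x - ‖V x‖ ^ 2 / a) * ‖f x‖ ^ 2 ∂μ
      ≤ ∫ x, (divergence (fun y => ‖f y‖ ^ 2 • V y) x + a * ‖fderiv ℝ f x‖ ^ 2) ∂μ :=
        integral_mono hint_left (hint_div.add (hint_grad.const_mul a)) fun x =>
          divergence_sub_mul_norm_sq_le ha (hf.differentiable one_ne_zero x)
            (hV.differentiable one_ne_zero x)
    _ = a * ∫ x, ‖fderiv ℝ f x‖ ^ 2 ∂μ := by
        rw [integral_add hint_div (hint_grad.const_mul a), integral_const_mul,
          integral_divergence_eq_zero hfV hc_fV, zero_add]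

end Divergence

section LogProfile

variable {R s : ℝ}

/-- The radial profile `log (1 + s / R²) / (R² + s)` of `logField`, as a function of `s = ‖x‖²`. -/
def logProfile (R s : ℝ) : ℝ := Real.log (1 + s / R ^ 2) / (R ^ 2 + s)

lemma log_one_add_div_sq_nonneg (R : ℝ) (hs : 0 ≤ s) : 0 ≤ Real.log (1 + s / R ^ 2) :=
  Real.log_nonneg (le_add_of_nonneg_right (by positivity))

lemma sq_log_one_add_div_sq_le (hR : R ≠ 0) (hs : 0 ≤ s) :
    Real.log (1 + s / R ^ 2) ^ 2 ≤ 8 * (Real.log R ^ 2 + (R ^ 2 + s)) := by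
  have hq : 0 < R ^ 2 + s := by positivity
  have hsplit : Real.log (1 + s / R ^ 2) = Real.log (R ^ 2 + s) - 2 * Real.log R := by
    rw [one_add_div (by positivity), Real.log_div hq.ne' (by positivity), Real.log_pow]
    norm_cast
  have hsqrt : Real.log (R ^ 2 + s) ≤ 2 * √(R ^ 2 + s) := by
    have hlog := Real.log_le_self (Real.sqrt_nonneg (R ^ 2 + s))
    rw [Real.log_sqrt hq.le] at hlog
    linarith
  have hle : Real.log (1 + s / R ^ 2) ≤ 2 * (|Real.log R| + √(R ^ 2 + s)) := by
    linarith [neg_le_abs (Real.log R)]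
  calc Real.log (1 + s / R ^ 2) ^ 2
      ≤ (2 * (|Real.log R| + √(R ^ 2 + s))) ^ 2 :=
        pow_le_pow_left₀ (log_one_add_div_sq_nonneg R hs) hle 2
    _ = 4 * (|Real.log R| + √(R ^ 2 + s)) ^ 2 := by ring
    _ ≤ 4 * (2 * (|Real.log R| ^ 2 + √(R ^ 2 + s) ^ 2)) := by gcongr; exact add_sq_le
    _ = 8 * (Real.log R ^ 2 + (R ^ 2 + s)) := by rw [sq_abs, Real.sq_sqrt hq.le]; ring

lemma hasDerivAt_logProfile (hR : R ≠ 0) (hs : 0 ≤ s) :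
    HasDerivAt (logProfile R) ((1 - Real.log (1 + s / R ^ 2)) / (R ^ 2 + s) ^ 2) s := by
  have hq : 0 < R ^ 2 + s := by positivity
  have hlog : HasDerivAt (fun t : ℝ => Real.log (1 + t / R ^ 2)) (1 / R ^ 2 / (1 + s / R ^ 2)) s :=
    (((hasDerivAt_id s).div_const (R ^ 2)).const_add 1).log (by positivity)
  refine (hlog.div ((hasDerivAt_id s).const_add (R ^ 2)) hq.ne').congr_deriv ?_
  simp only [id_eq]
  field_simp

end LogProfile

section LogField

variable {E : Type*} [NormedAddCommGroup E] {R : ℝ}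

/-- The weight `‖x‖² / (R² + ‖x‖²)²`, the squared norm of the gradient of the smooth potential
`log (R² + ‖x‖²) / 2`. It replaces `‖K R x‖²`, to which it is comparable. -/
def softInvSq (R : ℝ) (x : E) : ℝ := ‖x‖ ^ 2 / (R ^ 2 + ‖x‖ ^ 2) ^ 2

lemma continuous_softInvSq (hR : R ≠ 0) : Continuous (softInvSq R : E → ℝ) :=
  (continuous_norm.pow 2).div ((continuous_const.add (continuous_norm.pow 2)).pow 2)
    fun x => by positivity

/-- The radial vector field `log (1 + ‖x‖² / R²) / (R² + ‖x‖²) • x`, the test field for the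
Hardy-type inequality `integral_divergence_sub_mul_norm_sq_le`. -/
def logField [NormedSpace ℝ E] (R : ℝ) (x : E) : E := logProfile R (‖x‖ ^ 2) • x

lemma norm_logField_sq_le [NormedSpace ℝ E] (hR : R ≠ 0) (x : E) :
    ‖logField R x‖ ^ 2 ≤ 8 * (Real.log R ^ 2 * softInvSq R x + 1) := by
  have hs : 0 ≤ ‖x‖ ^ 2 := by positivity
  have hlog := sq_log_one_add_div_sq_le hR hs
  rw [logField, logProfile, softInvSq, norm_smul, mul_pow, Real.norm_eq_abs, sq_abs]
  set s := ‖x‖ ^ 2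
  have hq : 0 < R ^ 2 + s := by positivity
  calc (Real.log (1 + s / R ^ 2) / (R ^ 2 + s)) ^ 2 * s
      = Real.log (1 + s / R ^ 2) ^ 2 * (s / (R ^ 2 + s) ^ 2) := by field_simp
    _ ≤ 8 * (Real.log R ^ 2 + (R ^ 2 + s)) * (s / (R ^ 2 + s) ^ 2) := by gcongr
    _ = 8 * (Real.log R ^ 2 * (s / (R ^ 2 + s) ^ 2) + s / (R ^ 2 + s)) := by field_simp
    _ ≤ 8 * (Real.log R ^ 2 * (s / (R ^ 2 + s) ^ 2) + 1) := by
        gcongr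
        exact div_le_one_of_le₀ (le_add_of_nonneg_left (sq_nonneg R)) hq.le

variable [InnerProductSpace ℝ E]

lemma contDiff_logField {n : WithTop ℕ∞} (hR : R ≠ 0) : ContDiff ℝ n (logField R : E → E) := by
  have hsq : ContDiff ℝ n (fun x : E => ‖x‖ ^ 2) := contDiff_id.norm_sq ℝ
  have hlog : ContDiff ℝ n (fun x : E => Real.log (1 + ‖x‖ ^ 2 / R ^ 2)) :=
    (contDiff_const.add (hsq.div_const _)).log fun x => by positivity
  exact (hlog.div (contDiff_const.add hsq) fun x => by positivity).smul contDiff_id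

variable [FiniteDimensional ℝ E]

lemma divergence_radial {φ : ℝ → ℝ} {φ' : ℝ} {x : E} (hφ : HasDerivAt φ φ' (‖x‖ ^ 2)) :
    divergence (fun y : E => φ (‖y‖ ^ 2) • y) x =
      Module.finrank ℝ E * φ (‖x‖ ^ 2) + 2 * ‖x‖ ^ 2 * φ' := by
  have hcomp := hφ.comp_hasFDerivAt x (hasFDerivAt_id x).norm_sq
  have hid : divergence (fun y : E => y) x = Module.finrank ℝ E := by
    rw [divergence, fderiv_fun_id]
    exact LinearMap.trace_id ℝ E
  have hsmul := divergence_smul hcomp.differentiableAt (differentiableAt_fun_id (x := x))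
  rw [hid, hcomp.fderiv] at hsmul
  refine hsmul.trans ?_
  simp only [id_eq, Function.comp_apply, ContinuousLinearMap.comp_id, smul_apply,
    coe_innerSL_apply, real_inner_self_eq_norm_sq, nsmul_eq_mul, Nat.cast_ofNat, smul_eq_mul]
  ring

lemma two_mul_softInvSq_le_divergence_logField (hE : 2 ≤ Module.finrank ℝ E) (hR : R ≠ 0)
    (x : E) : 2 * softInvSq R x ≤ divergence (logField R) x := by
  have hs : 0 ≤ ‖x‖ ^ 2 := by positivity
  have hdiv : divergence (logField R) x = _ := divergence_radial (hasDerivAt_logProfile hR hs)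
  have hlog := log_one_add_div_sq_nonneg R hs
  rw [hdiv, softInvSq, logProfile]
  set s := ‖x‖ ^ 2
  set l := Real.log (1 + s / R ^ 2)
  calc 2 * (s / (R ^ 2 + s) ^ 2)
      ≤ 2 * (s / (R ^ 2 + s) ^ 2) + 2 * R ^ 2 * l / (R ^ 2 + s) ^ 2 :=
        le_add_of_nonneg_right (by positivity)
    _ = 2 * (l / (R ^ 2 + s)) + 2 * s * ((1 - l) / (R ^ 2 + s) ^ 2) := by
        field_simp
        ring
    _ ≤ Module.finrank ℝ E * (l / (R ^ 2 + s)) + 2 * s * ((1 - l) / (R ^ 2 + s) ^ 2) := by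
        gcongr
        exact_mod_cast hE

lemma softInvSq_sub_one_le (hE : 2 ≤ Module.finrank ℝ E) (hR : R ≠ 0) (x : E) :
    softInvSq R x - 1 ≤
      divergence (logField R) x - ‖logField R x‖ ^ 2 / (8 * (1 + Real.log R ^ 2)) := by
  have hnonneg : 0 ≤ softInvSq R x := by unfold softInvSq; positivity
  have hfield : ‖logField R x‖ ^ 2 / (8 * (1 + Real.log R ^ 2)) ≤ softInvSq R x + 1 := by
    rw [div_le_iff₀ (by positivity)]
    nlinarith [norm_logField_sq_le hR x, sq_nonneg (Real.log R)]
  linarith [two_mul_softInvSq_le_divergence_logField hE hR x]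

end LogField

section SoftHardy

variable {E F : Type*} [NormedAddCommGroup E] [InnerProductSpace ℝ E] [FiniteDimensional ℝ E]
  [MeasurableSpace E] [BorelSpace E] {μ : Measure E} [μ.IsAddHaarMeasure]
  [NormedAddCommGroup F] [InnerProductSpace ℝ F] {R : ℝ}

lemma integral_softInvSq_mul_norm_sq_le (hE : 2 ≤ Module.finrank ℝ E) (hR : R ≠ 0) {f : E → F}
    (hf : ContDiff ℝ 1 f) (hc : HasCompactSupport f) :
    ∫ x, softInvSq R x * ‖f x‖ ^ 2 ∂μ ≤
      8 * (1 + Real.log R ^ 2) * ∫ x, (‖f x‖ ^ 2 + ‖fderiv ℝ f x‖ ^ 2) ∂μ := by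
  set a := 8 * (1 + Real.log R ^ 2)
  have ha : 1 ≤ a := by nlinarith [sq_nonneg (Real.log R)]
  have hV : ContDiff ℝ 1 (logField R : E → E) := contDiff_logField hR
  have hint_w := integrable_mul_norm_sq (μ := μ) (continuous_softInvSq hR) hf.continuous hc
  have hint_f := integrable_norm_sq (μ := μ) hf.continuous hc
  have hint_grad := integrable_norm_sq (μ := μ) (hf.continuous_fderiv one_ne_zero)
    (hc.fderiv (𝕜 := ℝ))
  have hint_div := integrable_mul_norm_sq (μ := μ)
    ((continuous_divergence hV).sub ((hV.continuous.norm.pow 2).div_const a)) hf.continuous hc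
  have hhardy : ∫ x, (softInvSq R x * ‖f x‖ ^ 2 - ‖f x‖ ^ 2) ∂μ ≤
      a * ∫ x, ‖fderiv ℝ f x‖ ^ 2 ∂μ :=
    calc ∫ x, (softInvSq R x * ‖f x‖ ^ 2 - ‖f x‖ ^ 2) ∂μ
        ≤ ∫ x, (divergence (logField R) x - ‖logField R x‖ ^ 2 / a) * ‖f x‖ ^ 2 ∂μ :=
          integral_mono (hint_w.sub hint_f) hint_div fun x => by
            have hx := mul_le_mul_of_nonneg_right (softInvSq_sub_one_le hE hR x)
              (sq_nonneg ‖f x‖)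
            rwa [sub_mul, one_mul] at hx
      _ ≤ a * ∫ x, ‖fderiv ℝ f x‖ ^ 2 ∂μ :=
          integral_divergence_sub_mul_norm_sq_le (by positivity) hV hf hc
  have hmass : ∫ x, ‖f x‖ ^ 2 ∂μ ≤ a * ∫ x, ‖f x‖ ^ 2 ∂μ :=
    le_mul_of_one_le_left (integral_nonneg fun _ => sq_nonneg _) ha
  rw [integral_sub hint_w hint_f] at hhardy
  rw [integral_add hint_f hint_grad, mul_add]
  linarith

lemma integral_softInvSq_sub_mul_norm_sq_le (hE : 2 ≤ Module.finrank ℝ E) (hR : R ≠ 0)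
    {f : E → F} (hf : ContDiff ℝ 1 f) (hc : HasCompactSupport f) (y : E) :
    ∫ x, softInvSq R (x - y) * ‖f x‖ ^ 2 ∂μ ≤
      8 * (1 + Real.log R ^ 2) * ∫ x, (‖f x‖ ^ 2 + ‖fderiv ℝ f x‖ ^ 2) ∂μ := by
  have htranslate := integral_softInvSq_mul_norm_sq_le (μ := μ) hE hR
    (hf.comp (contDiff_id.add contDiff_const))
    (hc.comp_homeomorph (Homeomorph.addRight y))
  rw [← integral_add_right_eq_self _ y, ← integral_add_right_eq_self
    (fun x => ‖f x‖ ^ 2 + ‖fderiv ℝ f x‖ ^ 2) y]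
  simpa [Function.comp_def, fderiv_comp_add_right] using htranslate

end SoftHardy

section Slices

lemma hasCompactSupport_slice {X Y F : Type*} [TopologicalSpace X] [R1Space X]
    [TopologicalSpace Y] [Zero F] {f : X × Y → F} (hc : HasCompactSupport f) (y : Y) :
    HasCompactSupport (fun x => f (x, y)) :=
  HasCompactSupport.intro (hc.isCompact.image continuous_fst) fun x hx =>
    image_eq_zero_of_notMem_tsupport fun hxy => hx ⟨(x, y), hxy, rfl⟩

variable {E E' F : Type*} [NormedAddCommGroup E] [NormedSpace ℝ E] [NormedAddCommGroup E']
  [NormedSpace ℝ E'] [NormedAddCommGroup F] [NormedSpace ℝ F] {f : E × E' → F}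

lemma fderiv_slice {z : E × E'} (hf : DifferentiableAt ℝ f z) :
    fderiv ℝ (fun x => f (x, z.2)) z.1 = (fderiv ℝ f z).comp (ContinuousLinearMap.inl ℝ E E') :=
  (hf.hasFDerivAt.comp z.1 (hasFDerivAt_prodMk_left z.1 z.2)).fderiv

lemma integrable_norm_fderiv_slice_sq [MeasurableSpace (E × E')] [OpensMeasurableSpace (E × E')]
    {ρ : Measure (E × E')} [IsFiniteMeasureOnCompacts ρ] (hf : ContDiff ℝ 1 f)
    (hc : HasCompactSupport f) :
    Integrable (fun z : E × E' => ‖fderiv ℝ (fun x => f (x, z.2)) z.1‖ ^ 2) ρ := by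
  simp only [fderiv_slice (hf.differentiable one_ne_zero _)]
  exact integrable_norm_sq ((hf.continuous_fderiv one_ne_zero).clm_comp continuous_const)
    ((hc.fderiv (𝕜 := ℝ)).comp_left
      (g := fun T : E × E' →L[ℝ] F => T.comp (ContinuousLinearMap.inl ℝ E E')) (by simp))

end Slices

lemma integral_prod_softInvSq_mul_norm_sq_le {E F : Type*} [NormedAddCommGroup E]
    [InnerProductSpace ℝ E] [FiniteDimensional ℝ E] [MeasurableSpace E] [BorelSpace E]
    [NormedAddCommGroup F] [InnerProductSpace ℝ F] {μ ν : Measure E} [μ.IsAddHaarMeasure]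
    [SFinite ν] [IsFiniteMeasureOnCompacts ν] (hE : 2 ≤ Module.finrank ℝ E) {R : ℝ} (hR : R ≠ 0)
    {f : E × E → F} (hf : ContDiff ℝ 1 f) (hc : HasCompactSupport f) :
    ∫ z, softInvSq R (z.1 - z.2) * ‖f z‖ ^ 2 ∂μ.prod ν ≤
      8 * (1 + Real.log R ^ 2) *
        ∫ z, (‖f z‖ ^ 2 + ‖fderiv ℝ (fun x => f (x, z.2)) z.1‖ ^ 2) ∂μ.prod ν := by
  have hint_left := integrable_mul_norm_sq (μ := μ.prod ν)
    ((continuous_softInvSq hR).comp (continuous_fst.sub continuous_snd)) hf.continuous hc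
  have hint_right := (integrable_norm_sq (μ := μ.prod ν) hf.continuous hc).add
    (integrable_norm_fderiv_slice_sq hf hc)
  calc ∫ z, softInvSq R (z.1 - z.2) * ‖f z‖ ^ 2 ∂μ.prod ν
      = ∫ y, ∫ x, softInvSq R (x - y) * ‖f (x, y)‖ ^ 2 ∂μ ∂ν := integral_prod_symm _ hint_left
    _ ≤ ∫ y, 8 * (1 + Real.log R ^ 2) *
          ∫ x, (‖f (x, y)‖ ^ 2 + ‖fderiv ℝ (fun x' => f (x', y)) x‖ ^ 2) ∂μ ∂ν :=
        integral_mono hint_left.integral_prod_right (hint_right.integral_prod_right.const_mul _)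
          fun y => integral_softInvSq_sub_mul_norm_sq_le hE hR
            (hf.comp (contDiff_id.prodMk contDiff_const)) (hasCompactSupport_slice hc y) y
    _ = 8 * (1 + Real.log R ^ 2) *
          ∫ z, (‖f z‖ ^ 2 + ‖fderiv ℝ (fun x => f (x, z.2)) z.1‖ ^ 2) ∂μ.prod ν := by
        rw [integral_const_mul]
        exact congrArg _ (integral_prod_symm _ hint_right).symm

lemma norm_perp (x : E2) : ‖perp x‖ = ‖x‖ := by
  simp [perp, EuclideanSpace.norm_eq, Fin.sum_univ_two, add_comm]

lemma norm_K (R : ℝ) (x : E2) : ‖K R x‖ = (max R ‖x‖ ^ 2)⁻¹ * ‖x‖ := by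
  rw [K, norm_smul, norm_perp, Real.norm_of_nonneg (by positivity)]

lemma norm_K_sq_le {R : ℝ} (hR : 0 < R) (x : E2) : ‖K R x‖ ^ 2 ≤ 4 * softInvSq R x := by
  have hK := norm_K R x
  set m := max R ‖x‖
  have hm : 0 < m := lt_max_of_lt_left hR
  have hq : R ^ 2 + ‖x‖ ^ 2 ≤ 2 * m ^ 2 := by
    have hRm : R ^ 2 ≤ m ^ 2 := pow_le_pow_left₀ hR.le (le_max_left _ _) 2
    have hxm : ‖x‖ ^ 2 ≤ m ^ 2 := pow_le_pow_left₀ (norm_nonneg x) (le_max_right _ _) 2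
    linarith
  calc ‖K R x‖ ^ 2 = 4 * (‖x‖ ^ 2 / (2 * m ^ 2) ^ 2) := by
        rw [hK]
        field_simp
        norm_num
    _ ≤ 4 * softInvSq R x := by unfold softInvSq; gcongr

theorem statement6_general {F : Type*} [NormedAddCommGroup F] [InnerProductSpace ℝ F] {R : ℝ}
    (hR : 0 < R) {f : E2 × E2 → F} (hf : ContDiff ℝ 1 f) (hc : HasCompactSupport f) :
    ∫ z : E2 × E2, ‖K R (z.1 - z.2)‖ ^ 2 * ‖f z‖ ^ 2 ≤
      32 * (1 + Real.log R ^ 2) *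
        ∫ z : E2 × E2, (‖f z‖ ^ 2 + ‖fderiv ℝ (fun x => f (x, z.2)) z.1‖ ^ 2) := by
  have hint : Integrable (fun z : E2 × E2 => softInvSq R (z.1 - z.2) * ‖f z‖ ^ 2) :=
    integrable_mul_norm_sq ((continuous_softInvSq hR.ne').comp (continuous_fst.sub continuous_snd))
      hf.continuous hc
  have hsoft := integral_prod_softInvSq_mul_norm_sq_le (μ := (volume : Measure E2))
    (ν := (volume : Measure E2)) finrank_euclideanSpace_fin.ge hR.ne' hf hc
  calc ∫ z : E2 × E2, ‖K R (z.1 - z.2)‖ ^ 2 * ‖f z‖ ^ 2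
      ≤ ∫ z : E2 × E2, 4 * (softInvSq R (z.1 - z.2) * ‖f z‖ ^ 2) :=
        integral_mono_of_nonneg (ae_of_all _ fun z => by positivity) (hint.const_mul 4)
          (ae_of_all _ fun z =>
            (mul_le_mul_of_nonneg_right (norm_K_sq_le hR _) (sq_nonneg _)).trans_eq
              (mul_assoc _ _ _))
    _ = 4 * ∫ z : E2 × E2, softInvSq R (z.1 - z.2) * ‖f z‖ ^ 2 := integral_const_mul _ _
    _ ≤ 4 * (8 * (1 + Real.log R ^ 2) *
          ∫ z : E2 × E2, (‖f z‖ ^ 2 + ‖fderiv ℝ (fun x => f (x, z.2)) z.1‖ ^ 2)) := by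
        gcongr
        exact hsoft
    _ = 32 * (1 + Real.log R ^ 2) *
          ∫ z : E2 × E2, (‖f z‖ ^ 2 + ‖fderiv ℝ (fun x => f (x, z.2)) z.1‖ ^ 2) := by ring

lemma one_lt_neg_log {R : ℝ} (hR : 0 < R) (hR' : R < Real.exp (-1)) : 1 < -Real.log R :=
  lt_neg.1 ((Real.log_lt_iff_lt_exp hR).2 hR')

/-- Lemma 2.6 (singular two-body term), quadratic-form version: there is `C > 0` such
that for all `0 < R < e⁻¹` and all smooth compactly supported `f : ℝ²×ℝ² → ℂ`,
`∬ ‖K_R(x−y)‖² |f(x,y)|² ≤ C |log R|² ∬ (|f(x,y)|² + ‖∇ₓf(x,y)‖²)`. -/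
theorem statement6 :
    ∃ C : ℝ, 0 < C ∧ ∀ R : ℝ, 0 < R → R < Real.exp (-1) →
      ∀ f : E2 × E2 → ℂ, ContDiff ℝ (⊤ : ℕ∞) f → HasCompactSupport f →
        ∫ z : E2 × E2, ‖K R (z.1 - z.2)‖ ^ 2 * ‖f z‖ ^ 2
          ≤ C * (-Real.log R) ^ 2 *
              ∫ z : E2 × E2, (‖f z‖ ^ 2 + ‖fderiv ℝ (fun x => f (x, z.2)) z.1‖ ^ 2) := by
  refine ⟨64, by norm_num, fun R hR hR' f hf hc =>
    (statement6_general hR (hf.of_le (mod_cast le_top)) hc).trans ?_⟩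
  have hconst : 32 * (1 + Real.log R ^ 2) ≤ 64 * (-Real.log R) ^ 2 := by
    nlinarith [one_lt_neg_log hR hR']
  gcongr
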